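/- For functions f₁, f₂ : ℝ → ℝ define J₃(f₁, f₂) = ∫₀¹ f₁(t) ( ∫₀^t f₂(s) ( ∫₀^s f₁(r) f₂(r) dr ) ds ) dt. Let B be the set of pairs (f₁, f₂) of continuously differentiable functions with f₁(0) = f₂(0) = 0 and (1/2) ∫₀¹ (f₁′(s)² + f₂′(s)²) ds ≤ 1. Then there exists a pair (f₁, f₂) ∈ B with J₃(f₁, f₂) > 0, and there exists a pair (f₁, f₂) ∈ B with J₃(f₁, f₂) < 0. In particular, the supremum of J₃ over B is strictly positive and the infimum of J₃ over B is strictly negative. -/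

import Mathlib

/-!
Polynomial witnesses suffice, and both below have energy exactly `1`, so no rescaling is needed.
For `f₂(t) = t` and `f₁(t) = t - b t²` the nested integrals evaluate to
`J₃ = 1/105 - 13 b / 960 + b² / 216`. At `b = 0` this is `1/105 > 0`. As a quadratic in `b` it has
positive discriminant and its minimum is near `b = 1.46`; at `b = 3/2` it equals
`1/105 - 13/640 + 1/96 < 0`.
-/

open MeasureTheory intervalIntegral

/-- The energy of the pair `(t - b t², t)`. -/
lemma energy_eval (b : ℝ) :
    (1 / 2 : ℝ) * (∫ s in (0 : ℝ)..1,
      ((deriv (fun t : ℝ => t - b * t ^ 2) s) ^ 2 + (deriv (fun t : ℝ => t) s) ^ 2)) =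
      1 - b + 2 * b ^ 2 / 3 := by
  have hd : ∀ s : ℝ, deriv (fun t : ℝ => t - b * t ^ 2) s = 1 - b * (2 * s) := by
    intro s
    have h : HasDerivAt (fun t : ℝ => t - b * t ^ 2) _ s :=
      (hasDerivAt_id' s).sub ((hasDerivAt_pow 2 s).const_mul b)
    simpa using h.deriv
  have hF : ∀ s ∈ Set.uIcc (0 : ℝ) 1, HasDerivAt
      (fun s : ℝ => 2 * s - 2 * b * s ^ 2 + 4 * b ^ 2 / 3 * s ^ 3)
      ((1 - b * (2 * s)) ^ 2 + 1 ^ 2) s := by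
    intro s _
    refine HasDerivAt.congr_deriv ((((hasDerivAt_id' s).const_mul 2).sub ((hasDerivAt_pow 2 s).const_mul (2 * b))).add
      ((hasDerivAt_pow 3 s).const_mul (4 * b ^ 2 / 3))) ?_
    norm_num
    ring
  simp only [hd, deriv_id'']
  rw [integral_eq_sub_of_hasDerivAt hF
    (Continuous.intervalIntegrable (by fun_prop) _ _)]
  ring

/-- The value of `J₃` at the pair `(t - b t², t)`. -/
lemma functional_eval (b : ℝ) :
    (∫ t in (0 : ℝ)..1, (t - b * t ^ 2) *
      ∫ s in (0 : ℝ)..t, s * ∫ r in (0 : ℝ)..s, (r - b * r ^ 2) * r) =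
      1 / 105 - 13 * b / 960 + b ^ 2 / 216 := by
  have h1 : ∀ s : ℝ, (∫ r in (0 : ℝ)..s, (r - b * r ^ 2) * r) = s ^ 3 / 3 - b * s ^ 4 / 4 := by
    intro s
    have hF : ∀ r ∈ Set.uIcc (0 : ℝ) s, HasDerivAt
        (fun r : ℝ => 1 / 3 * r ^ 3 - b / 4 * r ^ 4) ((r - b * r ^ 2) * r) r := by
      intro r _
      refine HasDerivAt.congr_deriv (((hasDerivAt_pow 3 r).const_mul (1 / 3)).sub
        ((hasDerivAt_pow 4 r).const_mul (b / 4))) ?_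
      norm_num
      ring
    rw [integral_eq_sub_of_hasDerivAt hF (Continuous.intervalIntegrable (by fun_prop) _ _)]
    ring
  have h2 : ∀ t : ℝ, (∫ s in (0 : ℝ)..t, s * (s ^ 3 / 3 - b * s ^ 4 / 4)) =
      t ^ 5 / 15 - b * t ^ 6 / 24 := by
    intro t
    have hF : ∀ s ∈ Set.uIcc (0 : ℝ) t, HasDerivAt
        (fun s : ℝ => 1 / 15 * s ^ 5 - b / 24 * s ^ 6) (s * (s ^ 3 / 3 - b * s ^ 4 / 4)) s := by
      intro s _
      refine HasDerivAt.congr_deriv (((hasDerivAt_pow 5 s).const_mul (1 / 15)).sub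
        ((hasDerivAt_pow 6 s).const_mul (b / 24))) ?_
      norm_num
      ring
    rw [integral_eq_sub_of_hasDerivAt hF (Continuous.intervalIntegrable (by fun_prop) _ _)]
    ring
  simp only [h1, h2]
  have hF : ∀ t ∈ Set.uIcc (0 : ℝ) 1, HasDerivAt
      (fun t : ℝ => 1 / 105 * t ^ 7 - 13 * b / 960 * t ^ 8 + b ^ 2 / 216 * t ^ 9)
      ((t - b * t ^ 2) * (t ^ 5 / 15 - b * t ^ 6 / 24)) t := by
    intro t _
    refine HasDerivAt.congr_deriv ((((hasDerivAt_pow 7 t).const_mul (1 / 105)).sub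
      ((hasDerivAt_pow 8 t).const_mul (13 * b / 960))).add
      ((hasDerivAt_pow 9 t).const_mul (b ^ 2 / 216))) ?_
    norm_num
    ring
  rw [integral_eq_sub_of_hasDerivAt hF (Continuous.intervalIntegrable (by fun_prop) _ _)]
  ring

/-- **Example 3.4 (signs of the Lorenz '96 LIL functional).** For
`J₃(f₁,f₂) = ∫₀¹ f₁(t) (∫₀ᵗ f₂(s) (∫₀ˢ f₁(r) f₂(r) dr) ds) dt` and `B` the set of `C¹`
pairs `(f₁,f₂)` with `f₁(0) = f₂(0) = 0` and `(1/2)∫₀¹ (f₁'(s)² + f₂'(s)²) ds ≤ 1`,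
there exist pairs in `B` on which `J₃` is strictly positive, and pairs in `B` on which
`J₃` is strictly negative. -/
theorem lorenz96_functional_attains_both_signs :
    (∃ f₁ f₂ : ℝ → ℝ, ContDiff ℝ 1 f₁ ∧ ContDiff ℝ 1 f₂ ∧ f₁ 0 = 0 ∧ f₂ 0 = 0 ∧
      (1 / 2 : ℝ) * (∫ s in (0 : ℝ)..1, ((deriv f₁ s) ^ 2 + (deriv f₂ s) ^ 2)) ≤ 1 ∧
      0 < ∫ t in (0 : ℝ)..1, f₁ t *
            ∫ s in (0 : ℝ)..t, f₂ s * ∫ r in (0 : ℝ)..s, f₁ r * f₂ r) ∧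
    (∃ f₁ f₂ : ℝ → ℝ, ContDiff ℝ 1 f₁ ∧ ContDiff ℝ 1 f₂ ∧ f₁ 0 = 0 ∧ f₂ 0 = 0 ∧
      (1 / 2 : ℝ) * (∫ s in (0 : ℝ)..1, ((deriv f₁ s) ^ 2 + (deriv f₂ s) ^ 2)) ≤ 1 ∧
      (∫ t in (0 : ℝ)..1, f₁ t *
            ∫ s in (0 : ℝ)..t, f₂ s * ∫ r in (0 : ℝ)..s, f₁ r * f₂ r) < 0) := by
  refine ⟨⟨fun t => t - 0 * t ^ 2, fun t => t, by fun_prop, by fun_prop, by simp, rfl, ?_, ?_⟩,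
    ⟨fun t => t - 3 / 2 * t ^ 2, fun t => t, by fun_prop, by fun_prop, by simp, rfl, ?_, ?_⟩⟩
  · rw [energy_eval]; norm_num
  · rw [functional_eval]; norm_num
  · rw [energy_eval]; norm_num
  · rw [functional_eval]; norm_num
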